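/- For real ε in a neighbourhood of 0, set p(ε) = 4 + ε, c(ε) = 1 − 6/(p(ε)(p(ε)−1)), h₃(ε) = ((p(ε) − 3(p(ε)−1))² − 1)/(4 p(ε)(p(ε)−1)), h₅(ε) = ((p(ε) − 5(p(ε)−1))² − 1)/(4 p(ε)(p(ε)−1)), and N(ε) = (1/4)·(2c(ε) + h₃(ε)·(7 + 9h₃(ε)·(4h₃(ε)(1+h₃(ε)) − 5))). Then the limit as ε → 0 (through ε ≠ 0) of N(ε)/(h₅(ε) − h₃(ε) − 2) exists and equals 35/24; consequently the logarithmic two-point coupling β̃_{1,5} = −lim_{ε→0} N(ε)/(h₅(ε) − h₃(ε) − 2) of the logarithmic Ising model equals −35/24. -/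

import Mathlib

open Filter Topology

/-- The deformation parameter `p(ε) = 4 + ε` of the logarithmic Ising model. -/
noncomputable def pIsing (ε : ℝ) : ℝ := 4 + ε

/-- The central charge `c(ε) = 1 − 6/(p(ε)(p(ε)−1))`. -/
noncomputable def cIsing (ε : ℝ) : ℝ := 1 - 6 / (pIsing ε * (pIsing ε - 1))

/-- The Kac weight `h_{1,3}` at `p = 4 + ε`. -/
noncomputable def h3Ising (ε : ℝ) : ℝ :=
  ((pIsing ε - 3 * (pIsing ε - 1)) ^ 2 - 1) / (4 * pIsing ε * (pIsing ε - 1))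

/-- The Kac weight `h_{1,5}` at `p = 4 + ε`. -/
noncomputable def h5Ising (ε : ℝ) : ℝ :=
  ((pIsing ε - 5 * (pIsing ε - 1)) ^ 2 - 1) / (4 * pIsing ε * (pIsing ε - 1))

/-- The two-point normalization `N_{φ₂}(ε)` of the level-two descendant
`φ₂ = (L₋₂ − (3/4)L₋₁²)Φ_{1,3}`. -/
noncomputable def NIsing (ε : ℝ) : ℝ :=
  (1 / 4) * (2 * cIsing ε + h3Ising ε * (7 + 9 * h3Ising ε * (4 * h3Ising ε * (1 + h3Ising ε) - 5)))

/-!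
Along the curve `p ↦ (c_p, h_{1,3}(p))` everything is a rational function of `h = h_{1,3}`:
the central charge is `c = 10 - 3h - 12/(1 + h)`, the denominator `h_{1,5} - h_{1,3} - 2` is
`2h - 1`, and the numerator contains the same factor `2h - 1`. The limit is the value of the
remaining quotient at `h_{1,3}(4) = 1/2`.
-/

section Field

variable {K : Type*} [Field K]

/-- The central charge `c_p = 1 - 6/(p(p - 1))` as a function of the parameter `p`. -/
def centralCharge (p : K) : K := 1 - 6 / (p * (p - 1))

/-- The Kac weight `h_{r,s}(p)`; the indices `r` and `s` are taken in the field itself, so that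
they need no casts. -/
def kacWeight (r s p : K) : K := ((p * r - (p - 1) * s) ^ 2 - 1) / (4 * p * (p - 1))

/-- The two-point normalization of the descendant `(L₋₂ - (3/4)L₋₁²)Φ` of a primary field `Φ` of
conformal weight `h` at central charge `c`. -/
def levelTwoNorm (c h : K) : K := (1 / 4) * (2 * c + h * (7 + 9 * h * (4 * h * (1 + h) - 5)))

/-- The quotient of `levelTwoNorm` by `2h - 1` at the central charge for which `h = h_{1,3}`. It is
the ratio whose limit is minus the coupling, with the common zero at `h = 1/2`
cancelled. -/
def levelTwoQuotient (h : K) : K :=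
  (18 * h ^ 4 + 45 * h ^ 3 + 18 * h ^ 2 - 13 * h + 4) / (4 * (1 + h))

variable [CharZero K] {p : K}

lemma kacWeight_one_left (s : K) (hp₀ : p ≠ 0) (hp₁ : p ≠ 1) :
    kacWeight 1 s p = (s - 1) / 4 * ((s + 1) * ((p - 1) / p) - 2) := by
  have hp₁' : p - 1 ≠ 0 := sub_ne_zero.2 hp₁
  unfold kacWeight
  field_simp
  ring

lemma kacWeight_one_three (hp₀ : p ≠ 0) (hp₁ : p ≠ 1) :
    kacWeight 1 3 p = 2 * ((p - 1) / p) - 1 := by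
  rw [kacWeight_one_left 3 hp₀ hp₁]
  ring

lemma one_add_kacWeight_one_three_ne_zero (hp₀ : p ≠ 0) (hp₁ : p ≠ 1) :
    1 + kacWeight 1 3 p ≠ 0 := by
  rw [kacWeight_one_three hp₀ hp₁, add_sub_cancel]
  exact mul_ne_zero two_ne_zero (div_ne_zero (sub_ne_zero.2 hp₁) hp₀)

lemma two_mul_kacWeight_one_three_sub_one (hp₀ : p ≠ 0) (hp₁ : p ≠ 1) :
    2 * kacWeight 1 3 p - 1 = (p - 4) / p := by
  rw [kacWeight_one_three hp₀ hp₁]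
  field_simp
  ring

lemma kacWeight_one_five_sub_kacWeight_one_three_sub_two (hp₀ : p ≠ 0) (hp₁ : p ≠ 1) :
    kacWeight 1 5 p - kacWeight 1 3 p - 2 = 2 * kacWeight 1 3 p - 1 := by
  rw [kacWeight_one_left 5 hp₀ hp₁, kacWeight_one_three hp₀ hp₁]
  ring

lemma centralCharge_eq_of_kacWeight_one_three (hp₀ : p ≠ 0) (hp₁ : p ≠ 1) :
    centralCharge p = 10 - 3 * kacWeight 1 3 p - 12 / (1 + kacWeight 1 3 p) := by
  have hp₁' : p - 1 ≠ 0 := sub_ne_zero.2 hp₁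
  rw [kacWeight_one_three hp₀ hp₁, add_sub_cancel]
  unfold centralCharge
  field_simp
  ring

lemma levelTwoNorm_eq_mul_levelTwoQuotient {h : K} (hh : 1 + h ≠ 0) :
    levelTwoNorm (10 - 3 * h - 12 / (1 + h)) h = (2 * h - 1) * levelTwoQuotient h := by
  unfold levelTwoNorm levelTwoQuotient
  field_simp
  ring

lemma levelTwoNorm_div_eq_levelTwoQuotient (hp₀ : p ≠ 0) (hp₁ : p ≠ 1) (hp₄ : p ≠ 4) :
    levelTwoNorm (centralCharge p) (kacWeight 1 3 p) / (kacWeight 1 5 p - kacWeight 1 3 p - 2) =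
      levelTwoQuotient (kacWeight 1 3 p) := by
  have hden : 2 * kacWeight 1 3 p - 1 ≠ 0 := by
    rw [two_mul_kacWeight_one_three_sub_one hp₀ hp₁]
    exact div_ne_zero (sub_ne_zero.2 hp₄) hp₀
  rw [kacWeight_one_five_sub_kacWeight_one_three_sub_two hp₀ hp₁,
    centralCharge_eq_of_kacWeight_one_three hp₀ hp₁,
    levelTwoNorm_eq_mul_levelTwoQuotient (one_add_kacWeight_one_three_ne_zero hp₀ hp₁),
    mul_div_cancel_left₀ _ hden]

end Field

lemma continuousAt_kacWeight (r s : ℝ) {p : ℝ} (hp₀ : p ≠ 0) (hp₁ : p ≠ 1) :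
    ContinuousAt (kacWeight r s) p := by
  have hden : 4 * p * (p - 1) ≠ 0 :=
    mul_ne_zero (mul_ne_zero four_ne_zero hp₀) (sub_ne_zero.2 hp₁)
  unfold kacWeight
  fun_prop (disch := exact hden)

lemma continuousAt_levelTwoQuotient {h : ℝ} (hh : 1 + h ≠ 0) :
    ContinuousAt levelTwoQuotient h := by
  have hden : 4 * (1 + h) ≠ 0 := mul_ne_zero four_ne_zero hh
  unfold levelTwoQuotient
  fun_prop (disch := exact hden)

lemma kacWeight_one_three_four : kacWeight 1 3 (4 : ℝ) = 1 / 2 := by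
  norm_num [kacWeight]

lemma levelTwoQuotient_half : levelTwoQuotient (1 / 2 : ℝ) = 35 / 24 := by
  norm_num [levelTwoQuotient]

lemma tendsto_levelTwoQuotient_kacWeight_one_three :
    Tendsto (fun p : ℝ => levelTwoQuotient (kacWeight 1 3 p)) (𝓝 4) (𝓝 (35 / 24)) := by
  have hquot : Tendsto levelTwoQuotient (𝓝 (1 / 2 : ℝ)) (𝓝 (35 / 24)) :=
    levelTwoQuotient_half ▸ (continuousAt_levelTwoQuotient (by norm_num)).tendsto
  have hweight : Tendsto (kacWeight 1 3) (𝓝 (4 : ℝ)) (𝓝 (1 / 2)) :=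
    kacWeight_one_three_four ▸ (continuousAt_kacWeight 1 3 (by norm_num) (by norm_num)).tendsto
  exact hquot.comp hweight

lemma tendsto_levelTwoNorm_div :
    Tendsto (fun p : ℝ => levelTwoNorm (centralCharge p) (kacWeight 1 3 p) /
      (kacWeight 1 5 p - kacWeight 1 3 p - 2)) (𝓝[≠] 4) (𝓝 (35 / 24)) := by
  refine (tendsto_levelTwoQuotient_kacWeight_one_three.mono_left nhdsWithin_le_nhds).congr' ?_
  have hne : ∀ q : ℝ, 4 ≠ q → ∀ᶠ p in 𝓝[≠] 4, p ≠ q := fun q hq =>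
    nhdsWithin_le_nhds (eventually_ne_nhds hq)
  filter_upwards [hne 0 (by norm_num), hne 1 (by norm_num), self_mem_nhdsWithin] with p hp₀ hp₁ hp₄
  exact (levelTwoNorm_div_eq_levelTwoQuotient hp₀ hp₁ hp₄).symm

lemma tendsto_pIsing : Tendsto pIsing (𝓝[≠] 0) (𝓝[≠] 4) := by
  have hcont : ContinuousAt pIsing 0 := by
    unfold pIsing
    fun_prop
  have hzero : pIsing 0 = 4 := add_zero 4
  exact hzero ▸ hcont.continuousWithinAt.tendsto_nhdsWithin fun ε hε => by simpa [pIsing] using hε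

lemma NIsing_eq_levelTwoNorm (ε : ℝ) :
    NIsing ε = levelTwoNorm (cIsing ε) (h3Ising ε) := rfl

lemma cIsing_eq_centralCharge (ε : ℝ) : cIsing ε = centralCharge (pIsing ε) := rfl

lemma h3Ising_eq_kacWeight (ε : ℝ) : h3Ising ε = kacWeight 1 3 (pIsing ε) := by
  rw [h3Ising, kacWeight, mul_one, mul_comm 3]

lemma h5Ising_eq_kacWeight (ε : ℝ) : h5Ising ε = kacWeight 1 5 (pIsing ε) := by
  rw [h5Ising, kacWeight, mul_one, mul_comm 5]

/-- `lim_{ε→0} N(ε)/(h₅(ε) − h₃(ε) − 2) = 35/24`, hence the logarithmic two-point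
coupling `β̃_{1,5} = −lim_{ε→0} N(ε)/(h₅(ε) − h₃(ε) − 2)` of the logarithmic Ising model
equals `−35/24`. -/
theorem betaTilde_Ising :
    Tendsto (fun ε : ℝ => NIsing ε / (h5Ising ε - h3Ising ε - 2)) (𝓝[≠] 0) (𝓝 (35 / 24)) ∧
    Tendsto (fun ε : ℝ => -(NIsing ε / (h5Ising ε - h3Ising ε - 2))) (𝓝[≠] 0)
      (𝓝 (-(35 / 24))) := by
  have key : Tendsto (fun ε : ℝ => NIsing ε / (h5Ising ε - h3Ising ε - 2)) (𝓝[≠] 0)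
      (𝓝 (35 / 24)) := by
    simp only [NIsing_eq_levelTwoNorm, cIsing_eq_centralCharge, h3Ising_eq_kacWeight,
      h5Ising_eq_kacWeight]
    exact tendsto_levelTwoNorm_div.comp tendsto_pIsing
  exact ⟨key, key.neg⟩
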